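/- For all g₁, g₂ ∈ (0,1/2) and all r ∈ (0,1): (1 − 4g₁g₂(1−r))² ≥ E(4g₂√(1−4g₁²)·r²/(1+r⁴))² + E(4g₁√(1−4g₂²)·r²/(1+r⁴))². (Non-generic GHZ-class states ψ(g₁,g₂,0,r) with g₁,g₂ ≠ 0, g₃ = 0 and r ∈ (0,1) satisfy the source-entanglement monogamy relation E_s² ≥ E₁₂² + E₁₃² + E₂₃².) -/

import Mathlib

/-- Binary Shannon entropy (base 2), with the convention `0 * log₂ 0 = 0`
(automatic since `Real.logb 2 0 = 0`). -/
noncomputable def binEntropy (p : ℝ) : ℝ :=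
  -p * Real.logb 2 p - (1 - p) * Real.logb 2 (1 - p)

/-- Entanglement-of-formation function of the concurrence `C`. -/
noncomputable def eof (C : ℝ) : ℝ :=
  binEntropy ((1 + Real.sqrt (1 - C ^ 2)) / 2)

/-!
The entanglement of formation is at most the concurrence, because `h(p) ≤ 2 √(p (1 - p))`: the
quotient `h(p) / √(p (1 - p))` increases on `(0, 1/2]`, its derivative having the sign of
`(1 - p) log (1 - p) - p log p`. So it suffices to bound the sum of the squared concurrences by
the squared source entanglement. With `s = 4 g₁ g₂` and `v = 1 - r`, that sum is at most
`(1 - v ^ 2) (1 - s ^ 2)`, and `(1 - v ^ 2) (1 - s ^ 2) = (1 - s v) ^ 2 - (s - v) ^ 2`.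
-/

section BinaryEntropy

variable {p : ℝ}

lemma mul_log_le_one_sub_mul_log_one_sub (hp : 0 < p) (hp' : p ≤ 1 / 2) :
    p * Real.log p ≤ (1 - p) * Real.log (1 - p) := by
  have hq : 0 < 1 - p := by linarith
  -- `1 - p` is the convex combination of `p` and `1` in which `p` has weight `p / (1 - p)`.
  have hcomb : p / (1 - p) * p + (1 - p / (1 - p)) * 1 = 1 - p := by
    field_simp
    ring
  have hweight : 0 ≤ 1 - p / (1 - p) := by
    rw [sub_nonneg, div_le_one hq]
    linarith
  have hconcave := strictConcaveOn_log_Ioi.concaveOn.2 (Set.mem_Ioi.2 hp)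
    (Set.mem_Ioi.2 one_pos) (div_pos hp hq).le hweight (add_sub_cancel _ _)
  simp only [smul_eq_mul, hcomb, Real.log_one, mul_zero, add_zero] at hconcave
  calc p * Real.log p = (1 - p) * (p / (1 - p) * Real.log p) := by field_simp
    _ ≤ (1 - p) * Real.log (1 - p) := by gcongr

lemma hasDerivAt_real_binEntropy_div_sqrt (hp : 0 < p) (hp' : p < 1) :
    HasDerivAt (fun x ↦ Real.binEntropy x / √(x * (1 - x)))
      (((1 - p) * Real.log (1 - p) - p * Real.log p) / (2 * √(p * (1 - p)) ^ 3)) p := by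
  have hpq : 0 < p * (1 - p) := mul_pos hp (sub_pos.2 hp')
  have hsqrt : 0 < √(p * (1 - p)) := Real.sqrt_pos.2 hpq
  have hvar : HasDerivAt (fun x : ℝ ↦ x * (1 - x)) (1 - 2 * p) p :=
    ((hasDerivAt_id p).mul ((hasDerivAt_id p).const_sub 1)).congr_deriv (by simp only [id_eq]; ring)
  refine ((Real.hasDerivAt_binEntropy hp.ne' hp'.ne).div (hvar.sqrt hpq.ne')
    hsqrt.ne').congr_deriv ?_
  rw [Real.binEntropy_eq_negMulLog_add_negMulLog_one_sub, Real.negMulLog, Real.negMulLog]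
  field_simp
  rw [Real.sq_sqrt hpq.le]
  ring

lemma monotoneOn_real_binEntropy_div_sqrt :
    MonotoneOn (fun p ↦ Real.binEntropy p / √(p * (1 - p))) (Set.Ioc 0 (1 / 2)) := by
  have hderiv (p : ℝ) (hp : p ∈ Set.Ioc (0 : ℝ) (1 / 2)) :=
    hasDerivAt_real_binEntropy_div_sqrt hp.1 (by linarith [hp.2])
  refine monotoneOn_of_hasDerivWithinAt_nonneg (convex_Ioc 0 (1 / 2))
    (fun p hp ↦ (hderiv p hp).continuousAt.continuousWithinAt)
    (fun p hp ↦ (hderiv p (interior_subset hp)).hasDerivWithinAt) fun p hp ↦ ?_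
  obtain ⟨hp₀, hp₁⟩ := interior_subset hp
  have := sub_nonneg.2 (mul_log_le_one_sub_mul_log_one_sub hp₀ hp₁)
  positivity

lemma real_binEntropy_le_mul_sqrt_of_le_half (hp : 0 < p) (hp' : p ≤ 1 / 2) :
    Real.binEntropy p ≤ 2 * Real.log 2 * √(p * (1 - p)) := by
  have hsqrt : 0 < √(p * (1 - p)) := Real.sqrt_pos.2 (mul_pos hp (by linarith))
  have hhalf : Real.binEntropy (1 / 2) / √(1 / 2 * (1 - 1 / 2)) = 2 * Real.log 2 := by
    rw [show (1 / 2 * (1 - 1 / 2) : ℝ) = (1 / 2) ^ 2 by norm_num, Real.sqrt_sq (by norm_num),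
      one_div, Real.binEntropy_two_inv]
    ring
  rw [← div_le_iff₀ hsqrt, ← hhalf]
  exact monotoneOn_real_binEntropy_div_sqrt ⟨hp, hp'⟩ ⟨by norm_num, le_rfl⟩ hp'

lemma real_binEntropy_le_mul_sqrt (hp : 0 ≤ p) (hp' : p ≤ 1) :
    Real.binEntropy p ≤ 2 * Real.log 2 * √(p * (1 - p)) := by
  rcases hp.eq_or_lt with rfl | hp
  · simp
  rcases hp'.eq_or_lt with rfl | hp'
  · simp
  rcases le_total p (1 / 2) with hhalf | hhalf
  · exact real_binEntropy_le_mul_sqrt_of_le_half hp hhalf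
  · have := real_binEntropy_le_mul_sqrt_of_le_half (sub_pos.2 hp') (by linarith)
    rwa [Real.binEntropy_one_sub, sub_sub_cancel, mul_comm (1 - p)] at this

lemma binEntropy_eq_real_binEntropy_div_log_two (p : ℝ) :
    binEntropy p = Real.binEntropy p / Real.log 2 := by
  rw [binEntropy, Real.binEntropy_eq_negMulLog_add_negMulLog_one_sub, Real.negMulLog,
    Real.negMulLog, Real.logb, Real.logb]
  ring

lemma binEntropy_nonneg (hp : 0 ≤ p) (hp' : p ≤ 1) : 0 ≤ binEntropy p := by
  rw [binEntropy_eq_real_binEntropy_div_log_two]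
  exact div_nonneg (Real.binEntropy_nonneg hp hp') (Real.log_nonneg one_le_two)

lemma binEntropy_le_two_mul_sqrt (hp : 0 ≤ p) (hp' : p ≤ 1) :
    binEntropy p ≤ 2 * √(p * (1 - p)) := by
  rw [binEntropy_eq_real_binEntropy_div_log_two, div_le_iff₀ (Real.log_pos one_lt_two)]
  linarith [real_binEntropy_le_mul_sqrt hp hp']

end BinaryEntropy

lemma eof_sq_le_sq {C : ℝ} (hC : C ^ 2 ≤ 1) : eof C ^ 2 ≤ C ^ 2 := by
  set p := (1 + √(1 - C ^ 2)) / 2 with hp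
  have hsq : √(1 - C ^ 2) ^ 2 = 1 - C ^ 2 := Real.sq_sqrt (sub_nonneg.2 hC)
  have hp₀ : 0 ≤ p := by positivity
  have hp₁ : p ≤ 1 := by
    have : √(1 - C ^ 2) ≤ 1 := Real.sqrt_le_one.2 (sub_le_self 1 (sq_nonneg C))
    linarith
  have hprod : p * (1 - p) = C ^ 2 / 4 := by
    rw [hp]
    linear_combination -hsq / 4
  calc eof C ^ 2 ≤ (2 * √(p * (1 - p))) ^ 2 :=
        pow_le_pow_left₀ (binEntropy_nonneg hp₀ hp₁) (binEntropy_le_two_mul_sqrt hp₀ hp₁) 2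
    _ = C ^ 2 := by
        rw [mul_pow, Real.sq_sqrt (by rw [hprod]; positivity), hprod]
        ring

section Concurrence

/-- The concurrence `2 g' √(1 - 4 g²) / (4 k)`, with `k = (1 + r⁴) / (8 r²)`, of a two-party
reduction of `ψ(g₁, g₂, 0, r)`: it is `C₁₃` for `(g, g') = (g₁, g₂)` and `C₂₃` for
`(g, g') = (g₂, g₁)`. -/
noncomputable def reducedConcurrence (g g' r : ℝ) : ℝ :=
  4 * g' * √(1 - 4 * g ^ 2) * r ^ 2 / (1 + r ^ 4)

variable {g g' r : ℝ}

lemma reducedConcurrence_sq (hg : 4 * g ^ 2 ≤ 1) :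
    reducedConcurrence g g' r ^ 2 =
      (2 * r ^ 2 / (1 + r ^ 4)) ^ 2 * (4 * g' ^ 2 * (1 - 4 * g ^ 2)) := by
  rw [reducedConcurrence, div_pow, div_pow, mul_pow, mul_pow, Real.sq_sqrt (sub_nonneg.2 hg)]
  ring

lemma sq_two_mul_sq_div_one_add_pow_four_le (hr : 0 ≤ r) (hr' : r ≤ 1) :
    (2 * r ^ 2 / (1 + r ^ 4)) ^ 2 ≤ 1 - (1 - r) ^ 2 := by
  have : 0 ≤ 1 - r := sub_nonneg.2 hr'
  have hle : 1 - r ≤ (1 - r ^ 4) / (1 + r ^ 4) := by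
    rw [le_div_iff₀ (by positivity), ← sub_nonneg]
    calc 0 ≤ (1 - r) * (r + r ^ 2 + r ^ 3 * (1 - r)) := by positivity
      _ = 1 - r ^ 4 - (1 - r) * (1 + r ^ 4) := by ring
  calc (2 * r ^ 2 / (1 + r ^ 4)) ^ 2 = 1 - ((1 - r ^ 4) / (1 + r ^ 4)) ^ 2 := by
        field_simp
        ring
    _ ≤ 1 - (1 - r) ^ 2 := by gcongr

lemma reducedConcurrence_sq_add_sq_le (hg : 4 * g ^ 2 ≤ 1) (hg' : 4 * g' ^ 2 ≤ 1)
    (hr : 0 ≤ r) (hr' : r ≤ 1) :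
    reducedConcurrence g g' r ^ 2 + reducedConcurrence g' g r ^ 2 ≤
      (1 - (1 - r) ^ 2) * (1 - (4 * g * g') ^ 2) := by
  have hgap : 0 ≤ (1 - 4 * g ^ 2) * (1 - 4 * g' ^ 2) :=
    mul_nonneg (sub_nonneg.2 hg) (sub_nonneg.2 hg')
  have hprod : 0 ≤ 1 - (4 * g * g') ^ 2 := by
    have := mul_le_one₀ hg (by positivity) hg'
    linarith
  rw [reducedConcurrence_sq hg, reducedConcurrence_sq hg', ← mul_add]
  calc _ ≤ (2 * r ^ 2 / (1 + r ^ 4)) ^ 2 * (1 - (4 * g * g') ^ 2) := by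
        gcongr
        linarith
    _ ≤ _ := by
        gcongr
        exact sq_two_mul_sq_div_one_add_pow_four_le hr hr'

lemma reducedConcurrence_sq_add_sq_le_one (hg : 4 * g ^ 2 ≤ 1) (hg' : 4 * g' ^ 2 ≤ 1)
    (hr : 0 ≤ r) (hr' : r ≤ 1) :
    reducedConcurrence g g' r ^ 2 + reducedConcurrence g' g r ^ 2 ≤ 1 := by
  have hr_sq : 0 ≤ 1 - (1 - r) ^ 2 :=
    (sq_nonneg _).trans (sq_two_mul_sq_div_one_add_pow_four_le hr hr')
  calc _ ≤ (1 - (1 - r) ^ 2) * (1 - (4 * g * g') ^ 2) :=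
        reducedConcurrence_sq_add_sq_le hg hg' hr hr'
    _ ≤ 1 - (1 - r) ^ 2 := mul_le_of_le_one_right hr_sq (sub_le_self 1 (sq_nonneg _))
    _ ≤ 1 := sub_le_self 1 (sq_nonneg _)

end Concurrence

/-- Non-generic GHZ-class states `ψ(g₁,g₂,0,r)` with `g₁,g₂ ≠ 0` and `r ∈ (0,1)`
satisfy the source-entanglement monogamy relation `E_s² ≥ E₁₂² + E₁₃² + E₂₃²`. -/
theorem source_monogamy_nongeneric (g₁ g₂ r : ℝ)
    (hg₁ : g₁ ∈ Set.Ioo (0 : ℝ) (1 / 2)) (hg₂ : g₂ ∈ Set.Ioo (0 : ℝ) (1 / 2))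
    (hr : r ∈ Set.Ioo (0 : ℝ) 1) :
    (1 - 4 * g₁ * g₂ * (1 - r)) ^ 2 ≥
      (eof (4 * g₂ * Real.sqrt (1 - 4 * g₁ ^ 2) * r ^ 2 / (1 + r ^ 4))) ^ 2 +
      (eof (4 * g₁ * Real.sqrt (1 - 4 * g₂ ^ 2) * r ^ 2 / (1 + r ^ 4))) ^ 2 := by
  have four_mul_sq_le_one {g : ℝ} (hg : g ∈ Set.Ioo (0 : ℝ) (1 / 2)) : 4 * g ^ 2 ≤ 1 := by
    nlinarith [hg.1, hg.2]
  have hg₁' := four_mul_sq_le_one hg₁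
  have hg₂' := four_mul_sq_le_one hg₂
  have hC := reducedConcurrence_sq_add_sq_le_one hg₁' hg₂' hr.1.le hr.2.le
  change eof (reducedConcurrence g₁ g₂ r) ^ 2 + eof (reducedConcurrence g₂ g₁ r) ^ 2 ≤ _
  calc _ ≤ reducedConcurrence g₁ g₂ r ^ 2 + reducedConcurrence g₂ g₁ r ^ 2 :=
        add_le_add (eof_sq_le_sq ((le_add_of_nonneg_right (sq_nonneg _)).trans hC))
          (eof_sq_le_sq ((le_add_of_nonneg_left (sq_nonneg _)).trans hC))
    _ ≤ (1 - (1 - r) ^ 2) * (1 - (4 * g₁ * g₂) ^ 2) :=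
        reducedConcurrence_sq_add_sq_le hg₁' hg₂' hr.1.le hr.2.le
    _ = (1 - 4 * g₁ * g₂ * (1 - r)) ^ 2 - (4 * g₁ * g₂ - (1 - r)) ^ 2 := by ring
    _ ≤ (1 - 4 * g₁ * g₂ * (1 - r)) ^ 2 := sub_le_self _ (sq_nonneg _)
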